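/- The optimal function μ for the exponential radial Sobolev inequality satisfies the asymptotic expansions: as j → ∞, 1/μ(j) = 4 j e^{1−2γ−j} (1 − j^{−1} − (1/2) j^{−2} − (5/6) j^{−3} − (43/24) j^{−4} − (529/120) j^{−5} + O(j^{−6})); and as j → 0+, μ(j) = j²/16 + O(j³). Here γ is the Euler–Mascheroni constant. -/

import Mathlib

open MeasureTheory Real Filter Set

noncomputable section

/-- Admissible competitors for `μ(j)`: functions on `[1,∞)` (modeled as
differentiable on `[1,∞)`) with unit exterior kinetic energy,
`2 u(1)² = j` and finite mass. -/
def AdmMu (j : ℝ) (u : ℝ → ℝ) : Prop :=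
  (∀ r ∈ Ici (1 : ℝ), DifferentiableAt ℝ u r) ∧
  (∫ r in Ioi (1 : ℝ), (deriv u r) ^ 2 * r) = 1 ∧
  2 * (u 1) ^ 2 = j ∧
  IntegrableOn (fun r => (u r) ^ 2 * r) (Ioi (1 : ℝ))

/-- The set of masses of admissible competitors. -/
def muSet (j : ℝ) : Set ℝ :=
  {m | ∃ u : ℝ → ℝ, AdmMu j u ∧ m = ∫ r in Ioi (1 : ℝ), (u r) ^ 2 * r}

/-- The optimal function `μ(j)` for the exponential radial Sobolev
inequality. -/
def mu (j : ℝ) : ℝ := sInf (muSet j)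

/-!
If `P' ≥ P² / r - λ r`, completing the square gives `-(P u²)' ≤ (u'² + λ u²) r`, hence
`P(1) u(1)² ≤ ∫ u'² r + λ ∫ u² r`, with equality when `P = -r u' / u` and `λ` is the multiplier.

For small `j` the choice `P = κ r` gives `μ(j) ≥ j² / 16`, and the competitors `e^{-a (r - 1)}`
attain this value up to `O(j³)`.

In general the extremals are multiples of `K₀(2 √y r)`, and with `s = √y K₁(2 √y) / K₀(2 √y)` one
gets the exact parametrisation `1 / j = y + s - s²`, `μ(j) = j (s² - y) / (4 y)`, where `j → ∞`
corresponds to `y → 0`. There `1 / s = -log y - 2 γ + O(√y)`, so `y` is smaller than every power of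
`s`, and up to such terms `1 / j = s - s²` and
`1 / μ(j) = (4 / j) y s⁻² = 4 j e^{1 - 2 γ - j} · e^{s / (1 - s)} (1 - s)²`.
The polynomial in `1 / j` is the Taylor polynomial of the last two factors in the variable `s - s²`.
-/

open Asymptotics
open scoped Topology Nat

/-- The integrand `exp (-s - y / s)` of the integral representation of the Macdonald functions. -/
def macdonaldKernel (y s : ℝ) : ℝ := exp (-s - y / s)

/-- The Macdonald function (modified Bessel function of the second kind) in the normalisation
`macdonald ν y = 2 y ^ (ν / 2) K_ν(2 √y)`, given by its integral representation for `0 < y`. -/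
def macdonald (ν y : ℝ) : ℝ := ∫ s in Ioi 0, s ^ (ν - 1) * macdonaldKernel y s

/-- The derivative of `macdonald ν y` with respect to `ν` at `ν = 1`, as an integral. -/
def macdonaldLog (y : ℝ) : ℝ := ∫ s in Ioi 0, log s * macdonaldKernel y s

section Kernel

variable {y s : ℝ}

lemma macdonaldKernel_pos (y s : ℝ) : 0 < macdonaldKernel y s := exp_pos _

lemma macdonaldKernel_eq_mul (y s : ℝ) :
    macdonaldKernel y s = exp (-s) * exp (-(y / s)) := by
  rw [macdonaldKernel, sub_eq_add_neg, exp_add]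

lemma macdonaldKernel_le_exp_neg (hy : 0 ≤ y) (hs : 0 < s) :
    macdonaldKernel y s ≤ exp (-s) :=
  exp_le_exp.2 (sub_le_self _ (by positivity))

lemma macdonaldKernel_le_exp_neg_mul_pow (n : ℕ) (hy : 0 < y) (hs : 0 < s) :
    macdonaldKernel y s ≤ exp (-s) * (n ! * (s / y) ^ n) := by
  rw [macdonaldKernel_eq_mul, exp_neg (y / s)]
  gcongr
  calc (exp (y / s))⁻¹ ≤ ((y / s) ^ n / n !)⁻¹ :=
        inv_anti₀ (by positivity) (pow_div_factorial_le_exp _ (by positivity) n)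
    _ = n ! * (s / y) ^ n := by rw [inv_div, div_eq_mul_inv, ← inv_pow, inv_div]

lemma macdonaldKernel_anti {z : ℝ} (hyz : y ≤ z) (hs : 0 < s) :
    macdonaldKernel z s ≤ macdonaldKernel y s :=
  exp_le_exp.2 (by gcongr)

lemma macdonaldKernel_div_self (hy : y ≠ 0) (s : ℝ) :
    macdonaldKernel y (y / s) = macdonaldKernel y s := by
  rw [macdonaldKernel, macdonaldKernel, div_div_cancel₀ hy]
  ring_nf

lemma continuousOn_macdonaldKernel (y : ℝ) : ContinuousOn (macdonaldKernel y) (Ioi 0) :=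
  (continuousOn_neg.sub (continuousOn_const.div continuousOn_id fun _ hs => ne_of_gt hs)).rexp

lemma hasDerivAt_macdonaldKernel_left (y : ℝ) (s : ℝ) :
    HasDerivAt (fun y => macdonaldKernel y s) (-(macdonaldKernel y s / s)) y := by
  have h : HasDerivAt (fun y => -s - y / s) (-(1 / s)) y :=
    ((hasDerivAt_id y).div_const s).const_sub (-s)
  exact h.exp.congr_deriv (by rw [macdonaldKernel]; ring)

lemma hasDerivAt_macdonaldKernel_right (y : ℝ) (hs : s ≠ 0) :
    HasDerivAt (macdonaldKernel y) (y / s ^ 2 * macdonaldKernel y s - macdonaldKernel y s) s := by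
  have h : HasDerivAt (fun s => -s - y / s) (-1 - y * -(s ^ 2)⁻¹) s :=
    (hasDerivAt_neg s).sub ((hasDerivAt_inv hs).const_mul y)
  exact h.exp.congr_deriv (by rw [macdonaldKernel]; ring)

lemma continuousOn_rpow_const_Ioi (p : ℝ) : ContinuousOn (fun s : ℝ => s ^ p) (Ioi 0) :=
  continuousOn_id.rpow_const fun _ hs => Or.inl (ne_of_gt hs)

lemma continuousOn_log_Ioi : ContinuousOn log (Ioi 0) :=
  continuousOn_log.mono fun _ hs => ne_of_gt hs

lemma integrableOn_exp_neg_mul_rpow {p : ℝ} (hp : -1 < p) :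
    IntegrableOn (fun s => exp (-s) * s ^ p) (Ioi 0) := by
  simpa using GammaIntegral_convergent (s := p + 1) (by linarith)

/-- The factor `exp (-y / s)` vanishes to infinite order at `s = 0`, so any exponent is allowed. -/
lemma integrableOn_rpow_mul_macdonaldKernel (p : ℝ) (hy : 0 < y) :
    IntegrableOn (fun s => s ^ p * macdonaldKernel y s) (Ioi 0) := by
  obtain ⟨n, hn⟩ := exists_nat_gt (-1 - p)
  refine ((integrableOn_exp_neg_mul_rpow (p := p + n) (by linarith)).const_mul
    (n ! / y ^ n)).mono' (((continuousOn_rpow_const_Ioi p).mul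
      (continuousOn_macdonaldKernel y)).aestronglyMeasurable measurableSet_Ioi) ?_
  refine ae_restrict_of_forall_mem measurableSet_Ioi fun s (hs : 0 < s) => ?_
  have hK := macdonaldKernel_pos y s
  rw [norm_of_nonneg (by positivity)]
  calc s ^ p * macdonaldKernel y s ≤ s ^ p * (exp (-s) * (n ! * (s / y) ^ n)) := by
        gcongr
        exact macdonaldKernel_le_exp_neg_mul_pow n hy hs
    _ = n ! / y ^ n * (exp (-s) * s ^ (p + n)) := by
        rw [rpow_add_natCast hs.ne', div_pow]
        ring

lemma abs_log_le_add_rpow_div {ε : ℝ} (hε : 0 < ε) (hs : 0 < s) :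
    |log s| ≤ s + s ^ (-ε) / ε := by
  have upper := log_le_sub_one_of_pos hs
  have lower := log_le_rpow_div (inv_pos.2 hs).le hε
  rw [log_inv, inv_rpow hs.le, ← rpow_neg hs.le] at lower
  have : 0 < s ^ (-ε) / ε := by positivity
  exact abs_le.2 ⟨by linarith, by linarith⟩

lemma integrableOn_rpow_mul_log_mul_macdonaldKernel (p : ℝ) (hy : 0 < y) :
    IntegrableOn (fun s => s ^ p * log s * macdonaldKernel y s) (Ioi 0) := by
  refine ((integrableOn_rpow_mul_macdonaldKernel (p + 1) hy).add
    (integrableOn_rpow_mul_macdonaldKernel (p - 1) hy)).mono'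
      ((((continuousOn_rpow_const_Ioi p).mul continuousOn_log_Ioi).mul
        (continuousOn_macdonaldKernel y)).aestronglyMeasurable measurableSet_Ioi) ?_
  refine ae_restrict_of_forall_mem measurableSet_Ioi fun s (hs : 0 < s) => ?_
  have hK := macdonaldKernel_pos y s
  rw [norm_mul, norm_mul, norm_of_nonneg (by positivity), norm_of_nonneg hK.le, norm_eq_abs]
  calc s ^ p * |log s| * macdonaldKernel y s
      ≤ s ^ p * (s + s ^ (-1 : ℝ) / 1) * macdonaldKernel y s := by
        gcongr
        exact abs_log_le_add_rpow_div one_pos hs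
    _ = s ^ (p + 1) * macdonaldKernel y s + s ^ (p - 1) * macdonaldKernel y s := by
        rw [rpow_add_one hs.ne', rpow_sub_one hs.ne', rpow_neg_one]
        ring

lemma integrableOn_log_mul_macdonaldKernel (hy : 0 < y) :
    IntegrableOn (fun s => log s * macdonaldKernel y s) (Ioi 0) := by
  simpa using integrableOn_rpow_mul_log_mul_macdonaldKernel 0 hy

lemma tendsto_log_mul_macdonaldKernel_atTop (hy : 0 ≤ y) :
    Tendsto (fun s => log s * macdonaldKernel y s) atTop (𝓝 0) := by
  refine squeeze_zero_norm' ?_ (tendsto_pow_mul_exp_neg_atTop_nhds_zero 1)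
  filter_upwards [eventually_ge_atTop 1] with s hs
  have hlog := log_nonneg hs
  have hs0 : 0 < s := by linarith
  rw [norm_of_nonneg (mul_nonneg hlog (macdonaldKernel_pos y s).le), pow_one]
  exact mul_le_mul (log_le_self hs0.le) (macdonaldKernel_le_exp_neg hy hs0)
    (macdonaldKernel_pos y s).le hs0.le

lemma tendsto_log_mul_macdonaldKernel_nhdsGT_zero (hy : 0 < y) :
    Tendsto (fun s => log s * macdonaldKernel y s) (𝓝[>] 0) (𝓝 0) := by
  have hlim : Tendsto (fun s : ℝ => 1 / y * (log s * s ^ (1 : ℝ))) (𝓝[>] 0) (𝓝 0) := by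
    simpa using (tendsto_log_mul_rpow_nhdsGT_zero one_pos).const_mul (1 / y)
  refine squeeze_zero_norm' ?_ (norm_zero (E := ℝ) ▸ hlim.norm)
  filter_upwards [self_mem_nhdsWithin] with s (hs : 0 < s)
  have hK : macdonaldKernel y s ≤ 1 / y * s :=
    calc macdonaldKernel y s ≤ exp (-s) * (1 ! * (s / y) ^ 1) :=
          macdonaldKernel_le_exp_neg_mul_pow 1 hy hs
      _ ≤ 1 * (1 ! * (s / y) ^ 1) := by
          gcongr
          exact exp_le_one_iff.2 (by linarith)
      _ = 1 / y * s := by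
          rw [Nat.factorial_one]
          push_cast
          ring
  rw [rpow_one, norm_mul, norm_of_nonneg (macdonaldKernel_pos y s).le]
  calc ‖log s‖ * macdonaldKernel y s ≤ ‖log s‖ * (1 / y * s) := by gcongr
    _ = ‖1 / y * (log s * s)‖ := by
        rw [norm_mul, norm_mul, norm_of_nonneg hs.le, norm_of_nonneg (one_div_pos.2 hy).le]
        ring

end Kernel

section Macdonald

variable {y : ℝ}

lemma macdonald_pos (ν : ℝ) (hy : 0 < y) : 0 < macdonald ν y := by
  refine (setIntegral_pos_iff_support_of_nonneg_ae
    (ae_restrict_of_forall_mem measurableSet_Ioi fun s (hs : 0 < s) => ?_)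
    (integrableOn_rpow_mul_macdonaldKernel _ hy)).2 ?_
  · exact mul_nonneg (rpow_nonneg hs.le _) (macdonaldKernel_pos y s).le
  · have hsupp : Ioi 0 ⊆ Function.support fun s : ℝ => s ^ (ν - 1) * macdonaldKernel y s :=
      fun s (hs : 0 < s) => (mul_pos (rpow_pos_of_pos hs _) (macdonaldKernel_pos y s)).ne'
    rw [inter_eq_right.2 hsupp]
    simp

lemma hasDerivAt_macdonald (ν : ℝ) (hy : 0 < y) :
    HasDerivAt (macdonald ν) (-macdonald (ν - 1) y) y := by
  have hmeas (z p : ℝ) : AEStronglyMeasurable (fun s => s ^ p * macdonaldKernel z s)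
      (volume.restrict (Ioi 0)) :=
    ((continuousOn_rpow_const_Ioi p).mul
      (continuousOn_macdonaldKernel z)).aestronglyMeasurable measurableSet_Ioi
  have hderiv := hasDerivAt_integral_of_dominated_loc_of_deriv_le
    (F := fun z s => s ^ (ν - 1) * macdonaldKernel z s)
    (F' := fun z s => -(s ^ (ν - 1 - 1) * macdonaldKernel z s))
    (bound := fun s => s ^ (ν - 1 - 1) * macdonaldKernel (y / 2) s)
    (Ioi_mem_nhds (half_lt_self hy)) (Eventually.of_forall fun z => hmeas z _)
    (integrableOn_rpow_mul_macdonaldKernel _ hy) (hmeas y _).neg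
    (ae_restrict_of_forall_mem measurableSet_Ioi fun s (hs : 0 < s) z hz => ?_)
    (integrableOn_rpow_mul_macdonaldKernel _ (half_pos hy))
    (ae_restrict_of_forall_mem measurableSet_Ioi fun s (hs : 0 < s) z _ => ?_)
  · exact hderiv.2.congr_deriv (integral_neg _)
  · have hK := macdonaldKernel_pos z s
    rw [norm_neg, norm_of_nonneg (by positivity)]
    gcongr
    exact macdonaldKernel_anti (le_of_lt hz) hs
  · refine ((hasDerivAt_macdonaldKernel_left z s).const_mul _).congr_deriv ?_
    rw [rpow_sub_one hs.ne' (ν - 1)]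
    ring

lemma integral_Ioi_div_sq_mul_comp_div (hy : 0 < y) (g : ℝ → ℝ) :
    ∫ s in Ioi 0, y / s ^ 2 * g (y / s) = ∫ s in Ioi 0, g s := by
  calc ∫ s in Ioi 0, y / s ^ 2 * g (y / s)
      = ∫ s in Ioi 0, (|(-1 : ℝ)| * s ^ (-1 - 1 : ℝ)) • (y * g (y * s ^ (-1 : ℝ))) := by
        refine setIntegral_congr_fun measurableSet_Ioi fun s (hs : 0 < s) => ?_
        have hpow : s ^ (-1 - 1 : ℝ) = (s ^ 2)⁻¹ := by
          rw [rpow_sub_one hs.ne', rpow_neg_one]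
          field_simp
        simp only [hpow, rpow_neg_one, abs_neg, abs_one, one_mul, smul_eq_mul, div_eq_mul_inv]
        ring
    _ = ∫ s in Ioi 0, y * g (y * s) :=
        integral_comp_rpow_Ioi (fun s => y * g (y * s)) (by norm_num)
    _ = ∫ s in Ioi 0, g s := by
        rw [integral_const_mul, integral_comp_mul_left_Ioi g 0 hy, mul_zero, smul_eq_mul,
          mul_inv_cancel_left₀ hy.ne']

lemma macdonald_eq_rpow_mul_macdonald_neg (ν : ℝ) (hy : 0 < y) :
    macdonald ν y = y ^ ν * macdonald (-ν) y := by
  rw [macdonald, ← integral_Ioi_div_sq_mul_comp_div hy, macdonald, ← integral_const_mul]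
  refine setIntegral_congr_fun measurableSet_Ioi fun s (hs : 0 < s) => ?_
  simp only [macdonaldKernel_div_self hy.ne', div_rpow hy.le hs.le, rpow_sub_one hy.ne',
    rpow_sub_one hs.ne', rpow_neg hs.le]
  field_simp

lemma hasDerivAt_macdonald_one (hy : 0 < y) :
    HasDerivAt (macdonald 1) (-macdonald 0 y) y := by
  simpa using hasDerivAt_macdonald 1 hy

lemma hasDerivAt_macdonald_zero (hy : 0 < y) :
    HasDerivAt (macdonald 0) (-(macdonald 1 y / y)) y := by
  refine (hasDerivAt_macdonald 0 hy).congr_deriv ?_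
  rw [macdonald_eq_rpow_mul_macdonald_neg 1 hy, rpow_one, mul_div_cancel_left₀ _ hy.ne', zero_sub]

lemma macdonald_le_Gamma_div {ν : ℝ} (hν : -1 < ν) (hy : 0 < y) :
    macdonald ν y ≤ Gamma (ν + 1) / y := by
  rw [Gamma_eq_integral (by linarith), ← integral_div, add_sub_cancel_right]
  refine setIntegral_mono_on (integrableOn_rpow_mul_macdonaldKernel _ hy)
    ((integrableOn_exp_neg_mul_rpow hν).div_const y) measurableSet_Ioi fun s (hs : 0 < s) => ?_
  calc s ^ (ν - 1) * macdonaldKernel y s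
      ≤ s ^ (ν - 1) * (exp (-s) * (1 ! * (s / y) ^ 1)) := by
        gcongr
        exact macdonaldKernel_le_exp_neg_mul_pow 1 hy hs
    _ = exp (-s) * s ^ ν / y := by
        rw [rpow_sub_one hs.ne', Nat.factorial_one]
        field_simp
        simp

lemma macdonald_one_eq_integral (y : ℝ) : macdonald 1 y = ∫ s in Ioi 0, macdonaldKernel y s := by
  simp [macdonald]

lemma macdonald_zero_eq_integral (y : ℝ) :
    macdonald 0 y = ∫ s in Ioi 0, s⁻¹ * macdonaldKernel y s := by
  simp [macdonald, rpow_neg_one]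

lemma integrableOn_log_mul_div_sq_mul_macdonaldKernel (hy : 0 < y) :
    IntegrableOn (fun s => log s * (y / s ^ 2 * macdonaldKernel y s)) (Ioi 0) := by
  refine IntegrableOn.congr_fun
    ((integrableOn_rpow_mul_log_mul_macdonaldKernel (-2) hy).const_mul y)
    (fun s (hs : 0 < s) => ?_) measurableSet_Ioi
  simp only [rpow_neg hs.le, rpow_two]
  ring

lemma integral_log_mul_div_sq_mul_macdonaldKernel (hy : 0 < y) :
    ∫ s in Ioi 0, log s * (y / s ^ 2 * macdonaldKernel y s)
      = log y * macdonald 1 y - macdonaldLog y := by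
  have hone : IntegrableOn (macdonaldKernel y) (Ioi 0) := by
    simpa using integrableOn_rpow_mul_macdonaldKernel 0 hy
  calc ∫ s in Ioi 0, log s * (y / s ^ 2 * macdonaldKernel y s)
      = ∫ s in Ioi 0, y / s ^ 2 * (log (y / (y / s)) * macdonaldKernel y (y / s)) := by
        refine setIntegral_congr_fun measurableSet_Ioi fun s _ => ?_
        simp only [macdonaldKernel_div_self hy.ne', div_div_cancel₀ hy.ne']
        ring
    _ = ∫ s in Ioi 0, log (y / s) * macdonaldKernel y s :=
        integral_Ioi_div_sq_mul_comp_div hy fun s => log (y / s) * macdonaldKernel y s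
    _ = ∫ s in Ioi 0, (log y * macdonaldKernel y s - log s * macdonaldKernel y s) := by
        refine setIntegral_congr_fun measurableSet_Ioi fun s (hs : 0 < s) => ?_
        simp only [log_div hy.ne' hs.ne', sub_mul]
    _ = log y * macdonald 1 y - macdonaldLog y := by
        rw [integral_sub (hone.const_mul _) (integrableOn_log_mul_macdonaldKernel hy),
          integral_const_mul, macdonald_one_eq_integral, macdonaldLog]

-- Integrate the derivative of `log s * exp (-s - y / s)`.
lemma macdonald_zero_eq_two_mul_macdonaldLog_sub (hy : 0 < y) :
    macdonald 0 y = 2 * macdonaldLog y - log y * macdonald 1 y := by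
  have hlog := integrableOn_log_mul_macdonaldKernel hy
  have hweight := integrableOn_log_mul_div_sq_mul_macdonaldKernel hy
  have hparts := integral_Ioi_mul_deriv_eq_deriv_mul
    (fun s (hs : 0 < s) => hasDerivAt_log hs.ne')
    (fun s (hs : 0 < s) => hasDerivAt_macdonaldKernel_right y hs.ne')
    (by simpa only [Pi.mul_def, Pi.sub_def, mul_sub] using hweight.sub hlog)
    (by simpa [Pi.mul_def, rpow_neg_one] using integrableOn_rpow_mul_macdonaldKernel (-1) hy)
    (tendsto_log_mul_macdonaldKernel_nhdsGT_zero hy) (tendsto_log_mul_macdonaldKernel_atTop hy.le)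
  simp only [mul_sub] at hparts
  rw [integral_sub hweight hlog, integral_log_mul_div_sq_mul_macdonaldKernel hy,
    ← macdonald_zero_eq_integral, ← macdonaldLog] at hparts
  linarith

end Macdonald

section SmallArgument

variable {y : ℝ}

lemma integrableOn_exp_neg_mul_rpow_mul_log {p : ℝ} (hp : -1 < p) :
    IntegrableOn (fun s => exp (-s) * s ^ p * log s) (Ioi 0) := by
  set ε := (p + 1) / 2 with hε_def
  have hε : 0 < ε := by linarith
  have hmeas : ContinuousOn (fun s => exp (-s) * s ^ p * log s) (Ioi 0) :=
    (continuousOn_neg.rexp.mul (continuousOn_rpow_const_Ioi p)).mul continuousOn_log_Ioi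
  refine ((integrableOn_exp_neg_mul_rpow (p := p + 1) (by linarith)).add
    ((integrableOn_exp_neg_mul_rpow (p := p + -ε) (by linarith)).div_const ε)).mono'
      (hmeas.aestronglyMeasurable measurableSet_Ioi) ?_
  refine ae_restrict_of_forall_mem measurableSet_Ioi fun s (hs : 0 < s) => ?_
  rw [norm_mul, norm_of_nonneg (by positivity), norm_eq_abs]
  calc exp (-s) * s ^ p * |log s| ≤ exp (-s) * s ^ p * (s + s ^ (-ε) / ε) := by
        gcongr
        exact abs_log_le_add_rpow_div hε hs
    _ = exp (-s) * s ^ (p + 1) + exp (-s) * s ^ (p + -ε) / ε := by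
        rw [rpow_add_one hs.ne', rpow_add hs]
        ring

lemma integral_exp_neg_mul_log :
    ∫ s in Ioi 0, exp (-s) * log s = -eulerMascheroniConstant := by
  have hGamma : Complex.GammaIntegral =ᶠ[𝓝 1] Complex.Gamma := by
    filter_upwards [(isOpen_lt continuous_const Complex.continuous_re).mem_nhds
      (show (0 : ℝ) < (1 : ℂ).re by simp)] with z hz
    exact (Complex.Gamma_eq_integral hz).symm
  have hderiv := (Complex.hasDerivAt_Gamma_one.congr_of_eventuallyEq hGamma).unique
    (Complex.hasDerivAt_GammaIntegral (s := 1) (by simp))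
  have hreal : ∫ s : ℝ in Ioi 0, (s : ℂ) ^ ((1 : ℂ) - 1) * (log s * exp (-s))
      = ((∫ s in Ioi 0, exp (-s) * log s : ℝ) : ℂ) := by
    rw [← integral_complex_ofReal]
    refine setIntegral_congr_fun measurableSet_Ioi fun s _ => ?_
    simp [mul_comm]
  rw [hreal] at hderiv
  exact_mod_cast hderiv.symm

lemma one_sub_exp_neg_le_sqrt {w : ℝ} (hw : 0 ≤ w) : 1 - exp (-w) ≤ √w := by
  rcases le_total 1 w with h | h
  · linarith [one_le_sqrt.2 h, exp_pos (-w)]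
  · have : w ≤ √w := le_sqrt_of_sq_le (by nlinarith)
    linarith [add_one_le_exp (-w)]

lemma abs_macdonaldKernel_sub_exp_neg_le {s : ℝ} (hy : 0 ≤ y) (hs : 0 < s) :
    |macdonaldKernel y s - exp (-s)| ≤ √y * (exp (-s) * s ^ (-1 / 2 : ℝ)) := by
  rw [abs_sub_comm, abs_of_nonneg (sub_nonneg.2 (macdonaldKernel_le_exp_neg hy hs))]
  calc exp (-s) - macdonaldKernel y s = exp (-s) * (1 - exp (-(y / s))) := by
        rw [macdonaldKernel_eq_mul]
        ring
    _ ≤ exp (-s) * √(y / s) := by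
        gcongr
        exact one_sub_exp_neg_le_sqrt (by positivity)
    _ = √y * (exp (-s) * s ^ (-1 / 2 : ℝ)) := by
        rw [sqrt_div hy, neg_div, rpow_neg hs.le, ← sqrt_eq_rpow]
        ring

lemma integrableOn_mul_macdonaldKernel {f : ℝ → ℝ}
    (hf : IntegrableOn (fun s => exp (-s) * f s) (Ioi 0)) (hy : 0 ≤ y) :
    IntegrableOn (fun s => f s * macdonaldKernel y s) (Ioi 0) := by
  have hmeas : AEStronglyMeasurable (fun s => exp (-s) * f s * exp (-(y / s)))
      (volume.restrict (Ioi 0)) := hf.1.mul (Measurable.aestronglyMeasurable (by fun_prop))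
  refine Integrable.mono hf (hmeas.congr (ae_of_all _ fun s => ?_))
    (ae_restrict_of_forall_mem measurableSet_Ioi fun s (hs : 0 < s) => ?_)
  · simp only [macdonaldKernel_eq_mul]
    ring
  · rw [norm_mul, norm_mul, norm_of_nonneg (exp_pos _).le,
      norm_of_nonneg (macdonaldKernel_pos y s).le, mul_comm]
    gcongr
    exact macdonaldKernel_le_exp_neg hy hs

lemma isBigO_integral_mul_macdonaldKernel_sub {f : ℝ → ℝ}
    (hf : IntegrableOn (fun s => exp (-s) * f s) (Ioi 0))
    (hf' : IntegrableOn (fun s => exp (-s) * s ^ (-1 / 2 : ℝ) * f s) (Ioi 0)) :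
    (fun y => (∫ s in Ioi 0, f s * macdonaldKernel y s) - ∫ s in Ioi 0, exp (-s) * f s)
      =O[𝓝[>] 0] sqrt := by
  refine .of_bound (∫ s in Ioi 0, ‖exp (-s) * s ^ (-1 / 2 : ℝ) * f s‖) ?_
  filter_upwards [self_mem_nhdsWithin] with y (hy : 0 < y)
  have hbound : ∀ᵐ s ∂volume.restrict (Ioi 0),
      ‖f s * macdonaldKernel y s - exp (-s) * f s‖
        ≤ √y * ‖exp (-s) * s ^ (-1 / 2 : ℝ) * f s‖ := by
    refine ae_restrict_of_forall_mem measurableSet_Ioi fun s (hs : 0 < s) => ?_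
    calc ‖f s * macdonaldKernel y s - exp (-s) * f s‖
        = |macdonaldKernel y s - exp (-s)| * ‖f s‖ := by
          rw [← norm_eq_abs, ← norm_mul]
          ring_nf
      _ ≤ √y * (exp (-s) * s ^ (-1 / 2 : ℝ)) * ‖f s‖ := by
          gcongr
          exact abs_macdonaldKernel_sub_exp_neg_le hy.le hs
      _ = √y * ‖exp (-s) * s ^ (-1 / 2 : ℝ) * f s‖ := by
          rw [norm_mul _ (f s), norm_of_nonneg (mul_pos (exp_pos _) (rpow_pos_of_pos hs _)).le,
            mul_assoc √y]
  rw [← integral_sub (integrableOn_mul_macdonaldKernel hf hy.le) hf,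
    norm_of_nonneg (sqrt_nonneg y), mul_comm, ← integral_const_mul]
  exact norm_integral_le_of_norm_le (hf'.norm.const_mul _) hbound

lemma isBigO_macdonald_one_sub_one : (fun y => macdonald 1 y - 1) =O[𝓝[>] 0] sqrt := by
  have hexp_int : IntegrableOn (fun s : ℝ => exp (-s) * 1) (Ioi 0) := by
    simpa using integrableOn_exp_neg_mul_rpow (p := 0) (by norm_num)
  have h := isBigO_integral_mul_macdonaldKernel_sub hexp_int
    (by simpa using integrableOn_exp_neg_mul_rpow (p := -1 / 2) (by norm_num))
  simpa only [macdonald_one_eq_integral, one_mul, mul_one, integral_exp_neg_Ioi_zero] using h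

lemma isBigO_macdonaldLog_add_eulerMascheroniConstant :
    (fun y => macdonaldLog y + eulerMascheroniConstant) =O[𝓝[>] 0] sqrt := by
  have hexp_int : IntegrableOn (fun s => exp (-s) * log s) (Ioi 0) := by
    simpa using integrableOn_exp_neg_mul_rpow_mul_log (p := 0) (by norm_num)
  have h := isBigO_integral_mul_macdonaldKernel_sub hexp_int
    (integrableOn_exp_neg_mul_rpow_mul_log (by norm_num))
  simpa [integral_exp_neg_mul_log, macdonaldLog] using h

end SmallArgument

section Primitives

variable {y : ℝ}

/-- A primitive of `-macdonald 1 y ^ 2 / y`; up to a constant factor it is the exterior energy of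
`r ↦ macdonald 0 (y * r ^ 2)`. -/
def energyPrimitive (y : ℝ) : ℝ :=
  y * macdonald 0 y ^ 2 - macdonald 1 y ^ 2 + macdonald 1 y * macdonald 0 y

/-- A primitive of `-macdonald 0 y ^ 2`; up to a factor depending on `y` it is the exterior mass of
`r ↦ macdonald 0 (y * r ^ 2)`. -/
def massPrimitive (y : ℝ) : ℝ := macdonald 1 y ^ 2 - y * macdonald 0 y ^ 2

lemma hasDerivAt_energyPrimitive (hy : 0 < y) :
    HasDerivAt energyPrimitive (-(macdonald 1 y ^ 2 / y)) y := by
  have h₀ := hasDerivAt_macdonald_zero hy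
  have h₁ := hasDerivAt_macdonald_one hy
  refine ((((hasDerivAt_id y).mul (h₀.pow 2)).sub (h₁.pow 2)).add (h₁.mul h₀)).congr_deriv ?_
  simp only [id, Pi.pow_apply]
  field_simp
  ring

lemma hasDerivAt_massPrimitive (hy : 0 < y) :
    HasDerivAt massPrimitive (-macdonald 0 y ^ 2) y := by
  have h₀ := hasDerivAt_macdonald_zero hy
  have h₁ := hasDerivAt_macdonald_one hy
  refine ((h₁.pow 2).sub ((hasDerivAt_id y).mul (h₀.pow 2))).congr_deriv ?_
  simp only [id, Pi.pow_apply]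
  field_simp
  ring

lemma tendsto_macdonald_atTop {ν : ℝ} (hν : -1 < ν) : Tendsto (macdonald ν) atTop (𝓝 0) := by
  refine squeeze_zero' ?_ ?_ (tendsto_const_nhds.div_atTop (a := Gamma (ν + 1)) tendsto_id)
  · filter_upwards [eventually_gt_atTop 0] with y hy using (macdonald_pos ν hy).le
  · filter_upwards [eventually_gt_atTop 0] with y hy using macdonald_le_Gamma_div hν hy

lemma tendsto_mul_macdonald_zero_sq_atTop :
    Tendsto (fun y => y * macdonald 0 y ^ 2) atTop (𝓝 0) := by
  refine squeeze_zero' ?_ ?_ (tendsto_macdonald_atTop (ν := 0) (by norm_num))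
  · filter_upwards [eventually_gt_atTop 0] with y hy using by positivity
  · filter_upwards [eventually_gt_atTop 0] with y hy
    have hle : y * macdonald 0 y ≤ 1 := by
      have h := macdonald_le_Gamma_div (ν := 0) (by norm_num) hy
      rwa [zero_add, Gamma_one, le_div_iff₀' hy] at h
    nlinarith [macdonald_pos 0 hy]

lemma tendsto_energyPrimitive_atTop : Tendsto energyPrimitive atTop (𝓝 0) := by
  have h₀ := tendsto_macdonald_atTop (ν := 0) (by norm_num)
  have h₁ := tendsto_macdonald_atTop (ν := 1) (by norm_num)
  have h := (tendsto_mul_macdonald_zero_sq_atTop.sub (h₁.pow 2)).add (h₁.mul h₀)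
  exact h.trans (by simp)

lemma tendsto_massPrimitive_atTop : Tendsto massPrimitive atTop (𝓝 0) := by
  have h₁ := tendsto_macdonald_atTop (ν := 1) (by norm_num)
  have h := (h₁.pow 2).sub tendsto_mul_macdonald_zero_sq_atTop
  exact h.trans (by simp)

lemma energyPrimitive_pos (hy : 0 < y) : 0 < energyPrimitive y := by
  have hanti : StrictAntiOn energyPrimitive (Ioi 0) := by
    refine strictAntiOn_of_deriv_neg (convex_Ioi 0)
      (fun z hz => (hasDerivAt_energyPrimitive hz).continuousAt.continuousWithinAt) fun z hz => ?_
    have hz : 0 < z := interior_subset hz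
    have := macdonald_pos 1 hz
    rw [(hasDerivAt_energyPrimitive hz).deriv]
    exact neg_neg_of_pos (by positivity)
  have hlimit : 0 ≤ energyPrimitive (y + 1) := by
    refine le_of_tendsto tendsto_energyPrimitive_atTop ?_
    filter_upwards [eventually_ge_atTop (y + 1)] with z hz
    exact hanti.antitoneOn (show 0 < y + 1 by linarith) (show 0 < z by linarith) hz
  exact hlimit.trans_lt (hanti hy (show 0 < y + 1 by linarith) (lt_add_one y))

end Primitives

section Ratio

variable {y : ℝ}

/-- The ratio `√y K₁(2√y) / K₀(2√y)`, i.e. `-y` times the logarithmic derivative of `macdonald 0`.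
It solves a Riccati equation. -/
def macdonaldRatio (y : ℝ) : ℝ := macdonald 1 y / macdonald 0 y

/-- The value of `1 / j` for which a multiple of `r ↦ macdonald 0 (y * r ^ 2)` minimises `mu j`. -/
def reciprocalLevel (y : ℝ) : ℝ := y + macdonaldRatio y - macdonaldRatio y ^ 2

lemma macdonaldRatio_pos (hy : 0 < y) : 0 < macdonaldRatio y :=
  div_pos (macdonald_pos 1 hy) (macdonald_pos 0 hy)

lemma hasDerivAt_macdonaldRatio (hy : 0 < y) :
    HasDerivAt macdonaldRatio (macdonaldRatio y ^ 2 / y - 1) y := by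
  have hb := (macdonald_pos 0 hy).ne'
  refine ((hasDerivAt_macdonald_one hy).div (hasDerivAt_macdonald_zero hy) hb).congr_deriv ?_
  rw [macdonaldRatio]
  field_simp
  ring

lemma energyPrimitive_eq_mul_reciprocalLevel (hy : 0 < y) :
    energyPrimitive y = macdonald 0 y ^ 2 * reciprocalLevel y := by
  have hb := (macdonald_pos 0 hy).ne'
  rw [energyPrimitive, reciprocalLevel, macdonaldRatio]
  field_simp
  ring

lemma massPrimitive_eq_mul (hy : 0 < y) :
    massPrimitive y = macdonald 0 y ^ 2 * (macdonaldRatio y ^ 2 - y) := by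
  have hb := (macdonald_pos 0 hy).ne'
  rw [massPrimitive, macdonaldRatio]
  field_simp

lemma reciprocalLevel_pos (hy : 0 < y) : 0 < reciprocalLevel y := by
  have h := energyPrimitive_pos hy
  rw [energyPrimitive_eq_mul_reciprocalLevel hy] at h
  exact pos_of_mul_pos_right h (sq_nonneg _)

lemma macdonaldRatio_le_one_add_sqrt (hy : 0 < y) : macdonaldRatio y ≤ 1 + √y := by
  have h := reciprocalLevel_pos hy
  rw [reciprocalLevel] at h
  by_contra! hlt
  nlinarith [sq_sqrt hy.le, sqrt_nonneg y]

lemma continuousOn_reciprocalLevel : ContinuousOn reciprocalLevel (Ioi 0) := by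
  have h : ContinuousOn macdonaldRatio (Ioi 0) := fun y hy =>
    (hasDerivAt_macdonaldRatio hy).continuousAt.continuousWithinAt
  exact (continuousOn_id.add h).sub (h.pow 2)

lemma inv_macdonaldRatio_eq (hy : 0 < y) :
    (macdonaldRatio y)⁻¹ = 2 * macdonaldLog y / macdonald 1 y - log y := by
  have ha := (macdonald_pos 1 hy).ne'
  rw [macdonaldRatio, inv_div, macdonald_zero_eq_two_mul_macdonaldLog_sub hy]
  field_simp

lemma tendsto_sqrt_nhdsGT_zero : Tendsto sqrt (𝓝[>] 0) (𝓝 0) := by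
  simpa using (continuous_sqrt.tendsto 0).mono_left nhdsWithin_le_nhds

lemma isBigO_inv_macdonaldRatio_add_log :
    (fun y => (macdonaldRatio y)⁻¹ + log y + 2 * eulerMascheroniConstant) =O[𝓝[>] 0] sqrt := by
  have hone : Tendsto (macdonald 1) (𝓝[>] 0) (𝓝 1) := by
    simpa using (isBigO_macdonald_one_sub_one.trans_tendsto tendsto_sqrt_nhdsGT_zero).add_const 1
  have hinv : (fun y => 2 / macdonald 1 y) =O[𝓝[>] 0] (fun _ => (1 : ℝ)) :=
    (tendsto_const_nhds.div hone one_ne_zero).isBigO_one ℝ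
  have hnum := isBigO_macdonaldLog_add_eulerMascheroniConstant.add
    (isBigO_macdonald_one_sub_one.const_mul_left eulerMascheroniConstant)
  refine (hinv.mul hnum).congr' ?_ (.of_forall fun y => one_mul _)
  filter_upwards [self_mem_nhdsWithin] with y (hy : 0 < y)
  have ha := (macdonald_pos 1 hy).ne'
  rw [inv_macdonaldRatio_eq hy]
  field_simp
  ring

lemma tendsto_inv_macdonaldRatio : Tendsto (fun y => (macdonaldRatio y)⁻¹) (𝓝[>] 0) atTop := by
  have hrem := isBigO_inv_macdonaldRatio_add_log.trans_tendsto tendsto_sqrt_nhdsGT_zero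
  have hlog : Tendsto (fun y => -log y) (𝓝[>] 0) atTop :=
    tendsto_neg_atBot_atTop.comp tendsto_log_nhdsGT_zero
  refine ((hlog.atTop_add hrem).atTop_add
    (tendsto_const_nhds (x := -(2 * eulerMascheroniConstant)))).congr fun y => ?_
  ring

lemma tendsto_macdonaldRatio : Tendsto macdonaldRatio (𝓝[>] 0) (𝓝 0) :=
  tendsto_inv_macdonaldRatio.inv_tendsto_atTop.congr fun _ => inv_inv _

lemma tendsto_reciprocalLevel : Tendsto reciprocalLevel (𝓝[>] 0) (𝓝 0) := by
  have hid : Tendsto (fun y : ℝ => y) (𝓝[>] 0) (𝓝 0) := nhdsWithin_le_nhds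
  have h := (hid.add tendsto_macdonaldRatio).sub (tendsto_macdonaldRatio.pow 2)
  exact h.trans (by simp)

lemma isBigO_id_macdonaldRatio_pow (n : ℕ) :
    (fun y => y) =O[𝓝[>] 0] fun y => macdonaldRatio y ^ n := by
  have hexp : (fun y => exp (-(macdonaldRatio y)⁻¹)) =O[𝓝[>] 0] fun y => macdonaldRatio y ^ n := by
    have hlim := (tendsto_pow_mul_exp_neg_atTop_nhds_zero n).comp tendsto_inv_macdonaldRatio
    refine ((isBigO_refl (fun y => macdonaldRatio y ^ n) _).mul (hlim.isBigO_one ℝ)).congr'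
      ?_ (.of_forall fun y => mul_one _)
    filter_upwards [self_mem_nhdsWithin] with y (hy : 0 < y)
    have hs := (macdonaldRatio_pos hy).ne'
    simp only [Function.comp_apply, inv_pow]
    rw [mul_inv_cancel_left₀ (pow_ne_zero n hs)]
  have hrem := isBigO_inv_macdonaldRatio_add_log.trans_tendsto tendsto_sqrt_nhdsGT_zero
  have hconst := ((hrem.sub_const (2 * eulerMascheroniConstant)).rexp).isBigO_one ℝ
  refine (hconst.mul hexp).congr' ?_ (.of_forall fun y => one_mul _)
  filter_upwards [self_mem_nhdsWithin] with y (hy : 0 < y)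
  rw [← exp_add]
  convert exp_log hy using 2
  ring

lemma isBigO_sqrt_macdonaldRatio_pow (n : ℕ) :
    sqrt =O[𝓝[>] 0] fun y => macdonaldRatio y ^ n := by
  refine IsBigO.of_pow two_ne_zero ((isBigO_id_macdonaldRatio_pow (n * 2)).congr' ?_
    (.of_forall fun y => pow_mul _ n 2))
  filter_upwards [self_mem_nhdsWithin] with y (hy : 0 < y) using (sq_sqrt hy.le).symm

end Ratio

section Variational

/-- The kinetic energy `∫ u'² r dr` outside radius `R`; it is `0` by convention if it diverges. -/
def exteriorEnergy (R : ℝ) (u : ℝ → ℝ) : ℝ := ∫ r in Ioi R, deriv u r ^ 2 * r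

/-- The mass `∫ u² r dr` outside radius `R`; it is `0` by convention if it diverges. -/
def exteriorMass (R : ℝ) (u : ℝ → ℝ) : ℝ := ∫ r in Ioi R, u r ^ 2 * r

/-- `P` is a supersolution on `[R, ∞)` of the Riccati equation `P' = P² / r - lam * r`, which is
satisfied by `P = -r v' / v` whenever `v'' + v' / r = lam * v`. -/
def IsRiccatiSupersolution (R lam : ℝ) (P : ℝ → ℝ) : Prop :=
  ∀ r, R ≤ r → DifferentiableAt ℝ P r ∧ P r ^ 2 / r - lam * r ≤ deriv P r

variable {R lam C : ℝ} {u P : ℝ → ℝ}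

lemma exists_lt_of_integrableOn_Ioi {f : ℝ → ℝ} {ε : ℝ} (hf : IntegrableOn f (Ioi R))
    (hε : 0 < ε) : ∃ x ∈ Ioi R, f x < ε := by
  by_contra! hle
  have hconst : IntegrableOn (fun _ => ε) (Ioi R) := by
    refine hf.mono' (by fun_prop) (ae_restrict_of_forall_mem measurableSet_Ioi fun x hx => ?_)
    rw [norm_of_nonneg hε.le]
    exact hle x hx
  rw [integrableOn_const_iff] at hconst
  rcases hconst with h | h
  · exact hε.ne' (by simpa using h)
  · simp at h

lemma neg_riccati_deriv_le {r p p' v v' : ℝ} (hr : 0 < r) (h : p ^ 2 / r - lam * r ≤ p') :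
    -(p' * v ^ 2 + p * (2 * v * v')) ≤ v' ^ 2 * r + lam * (v ^ 2 * r) := by
  have hsq : r * (v' + p * v / r) ^ 2 = v' ^ 2 * r + 2 * p * v * v' + p ^ 2 / r * v ^ 2 := by
    field_simp
    ring
  have hnonneg : 0 ≤ r * (v' + p * v / r) ^ 2 := by positivity
  have hmul := mul_le_mul_of_nonneg_right h (sq_nonneg v)
  linarith

lemma IsRiccatiSupersolution.sub_le_intervalIntegral {b : ℝ} (hP : IsRiccatiSupersolution R lam P)
    (hR : 0 < R) (hRb : R ≤ b) (hu : ∀ r, R ≤ r → DifferentiableAt ℝ u r)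
    (hsum_int : IntegrableOn (fun r => deriv u r ^ 2 * r + lam * (u r ^ 2 * r)) (Icc R b)) :
    P R * u R ^ 2 - P b * u b ^ 2 ≤ ∫ r in R..b, (deriv u r ^ 2 * r + lam * (u r ^ 2 * r)) := by
  have hderiv (r : ℝ) (hr : R ≤ r) : HasDerivAt (fun r => -(P r * u r ^ 2))
      (-(deriv P r * u r ^ 2 + P r * (2 * u r * deriv u r))) r := by
    refine ((hP r hr).1.hasDerivAt.mul ((hu r hr).hasDerivAt.pow 2)).neg.congr_deriv ?_
    simp
  have hle := intervalIntegral.sub_le_integral_of_hasDeriv_right_of_le hRb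
    (fun r hr => (hderiv r hr.1).continuousAt.continuousWithinAt)
    (fun r hr => (hderiv r hr.1.le).hasDerivWithinAt) hsum_int
    (fun r hr => neg_riccati_deriv_le (hR.trans hr.1) (hP r hr.1.le).2)
  linarith

lemma IsRiccatiSupersolution.mul_sq_le (hP : IsRiccatiSupersolution R lam P) (hR : 0 < R)
    (hlam : 0 ≤ lam) (hC : 0 < C) (hPC : ∀ r, R ≤ r → P r ≤ C * r)
    (hu : ∀ r, R ≤ r → DifferentiableAt ℝ u r)
    (henergy : IntegrableOn (fun r => deriv u r ^ 2 * r) (Ioi R))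
    (hmass : IntegrableOn (fun r => u r ^ 2 * r) (Ioi R)) :
    P R * u R ^ 2 ≤ exteriorEnergy R u + lam * exteriorMass R u := by
  have hsum_int : IntegrableOn (fun r => deriv u r ^ 2 * r + lam * (u r ^ 2 * r)) (Ioi R) :=
    henergy.add (hmass.const_mul lam)
  have htotal : ∫ r in Ioi R, (deriv u r ^ 2 * r + lam * (u r ^ 2 * r))
      = exteriorEnergy R u + lam * exteriorMass R u := by
    rw [integral_add henergy (hmass.const_mul lam), integral_const_mul, exteriorEnergy,
      exteriorMass]
  refine le_of_forall_pos_le_add fun ε hε => ?_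
  obtain ⟨b, hRb : R < b, hb⟩ := exists_lt_of_integrableOn_Ioi hmass (div_pos hε hC)
  have hfinite := hP.sub_le_intervalIntegral hR hRb.le hu
    (by rw [integrableOn_Icc_iff_integrableOn_Ioc]; exact hsum_int.mono_set Ioc_subset_Ioi_self)
  have hextend : ∫ r in R..b, (deriv u r ^ 2 * r + lam * (u r ^ 2 * r))
      ≤ exteriorEnergy R u + lam * exteriorMass R u := by
    rw [← htotal, intervalIntegral.integral_of_le hRb.le]
    refine setIntegral_mono_set hsum_int
      (ae_restrict_of_forall_mem measurableSet_Ioi fun r (hr : R < r) => ?_)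
      Ioc_subset_Ioi_self.eventuallyLE
    have := hR.trans hr
    simp only [Pi.zero_apply]
    positivity
  have hboundary : P b * u b ^ 2 ≤ ε :=
    calc P b * u b ^ 2 ≤ C * b * u b ^ 2 := by
          gcongr
          exact hPC b hRb.le
      _ = C * (u b ^ 2 * b) := by ring
      _ ≤ C * (ε / C) := by gcongr
      _ = ε := mul_div_cancel₀ ε hC.ne'
  linarith

end Variational

section Mu

variable {j : ℝ} {u : ℝ → ℝ}

lemma AdmMu.riccatiSupersolution_mul_le {lam C : ℝ} {P : ℝ → ℝ} (hu : AdmMu j u)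
    (hP : IsRiccatiSupersolution 1 lam P) (hlam : 0 ≤ lam) (hC : 0 < C)
    (hPC : ∀ r, 1 ≤ r → P r ≤ C * r) :
    P 1 * (j / 2) ≤ 1 + lam * exteriorMass 1 u := by
  obtain ⟨hdiff, henergy, hj, hmass⟩ := hu
  have henergy_int : IntegrableOn (fun r => deriv u r ^ 2 * r) (Ioi 1) :=
    not_imp_comm.1 integral_undef (by rw [henergy]; exact one_ne_zero)
  have h := hP.mul_sq_le one_pos hlam hC hPC hdiff henergy_int hmass
  rwa [exteriorEnergy, henergy, ← show j / 2 = u 1 ^ 2 by rw [← hj]; ring] at h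

lemma bddBelow_muSet (j : ℝ) : BddBelow (muSet j) := by
  refine ⟨0, ?_⟩
  rintro _ ⟨u, -, rfl⟩
  refine setIntegral_nonneg measurableSet_Ioi fun r (hr : 1 < r) => ?_
  have : 0 < r := by linarith
  positivity

lemma div_mem_muSet {v : ℝ → ℝ} (hv : ∀ r, 1 ≤ r → DifferentiableAt ℝ v r)
    (henergy : 0 < exteriorEnergy 1 v) (hmass : IntegrableOn (fun r => v r ^ 2 * r) (Ioi 1)) :
    exteriorMass 1 v / exteriorEnergy 1 v ∈ muSet (2 * v 1 ^ 2 / exteriorEnergy 1 v) := by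
  set E := exteriorEnergy 1 v with hE
  set c := √E⁻¹
  have hc : c ^ 2 = E⁻¹ := sq_sqrt (by positivity)
  have hscale (w : ℝ → ℝ) : (fun r => (c * w r) ^ 2 * r) = fun r => E⁻¹ * (w r ^ 2 * r) := by
    funext r
    rw [mul_pow, hc, mul_assoc]
  refine ⟨fun r => c * v r, ⟨fun r hr => (hv r hr).const_mul c, ?_, ?_, ?_⟩, ?_⟩
  · simp only [deriv_const_mul_field]
    rw [hscale, integral_const_mul, ← exteriorEnergy, ← hE, inv_mul_cancel₀ henergy.ne']
  · rw [mul_pow, hc]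
    ring
  · rw [hscale]
    exact hmass.const_mul _
  · rw [hscale, integral_const_mul, ← exteriorMass]
    ring

end Mu

section SmallLevel

variable {a j : ℝ}

lemma hasDerivAt_exp_neg_mul_sub_one (a r : ℝ) :
    HasDerivAt (fun r => exp (-a * (r - 1))) (-a * exp (-a * (r - 1))) r := by
  have h : HasDerivAt (fun r => -a * (r - 1)) (-a * 1) r :=
    ((hasDerivAt_id r).sub_const 1).const_mul (-a)
  exact h.exp.congr_deriv (by ring)

lemma hasDerivAt_exp_sq_mul_primitive (ha : a ≠ 0) (r : ℝ) :
    HasDerivAt (fun r => -(r / (2 * a) + 1 / (4 * a ^ 2)) * exp (-a * (r - 1)) ^ 2)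
      (exp (-a * (r - 1)) ^ 2 * r) r := by
  refine (((((hasDerivAt_id r).div_const (2 * a)).add_const (1 / (4 * a ^ 2))).neg).mul
    ((hasDerivAt_exp_neg_mul_sub_one a r).pow 2)).congr_deriv ?_
  simp only [id, Pi.neg_apply, Pi.pow_apply]
  field_simp
  ring

lemma tendsto_exp_sq_mul_primitive (ha : 0 < a) :
    Tendsto (fun r => -(r / (2 * a) + 1 / (4 * a ^ 2)) * exp (-a * (r - 1)) ^ 2) atTop (𝓝 0) := by
  have hscale : Tendsto (fun r => 2 * a * r) atTop atTop :=
    tendsto_id.const_mul_atTop (by positivity)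
  have hlim := (((tendsto_pow_mul_exp_neg_atTop_nhds_zero 1).comp hscale).add
    ((tendsto_pow_mul_exp_neg_atTop_nhds_zero 0).comp hscale)).const_mul
      (-(exp (2 * a) / (4 * a ^ 2)))
  rw [add_zero, mul_zero] at hlim
  refine hlim.congr fun r => ?_
  have hexp : exp (-a * (r - 1)) ^ 2 = exp (2 * a) * exp (-(2 * a * r)) := by
    rw [← exp_nat_mul, ← exp_add]
    push_cast
    ring_nf
  rw [hexp]
  simp only [Function.comp_apply, pow_one, pow_zero]
  field_simp
  ring

lemma exp_sq_mul_nonneg {r : ℝ} (hr : r ∈ Ioi 1) : 0 ≤ exp (-a * (r - 1)) ^ 2 * r := by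
  have : 0 < r := zero_lt_one.trans hr
  positivity

lemma integrableOn_exp_sq_mul (ha : 0 < a) :
    IntegrableOn (fun r => exp (-a * (r - 1)) ^ 2 * r) (Ioi 1) :=
  integrableOn_Ioi_deriv_of_nonneg' (fun r _ => hasDerivAt_exp_sq_mul_primitive ha.ne' r)
    (fun _ => exp_sq_mul_nonneg) (tendsto_exp_sq_mul_primitive ha)

lemma exteriorMass_exp (ha : 0 < a) :
    exteriorMass 1 (fun r => exp (-a * (r - 1))) = (2 * a + 1) / (4 * a ^ 2) := by
  rw [exteriorMass, integral_Ioi_of_hasDerivAt_of_nonneg'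
    (fun r _ => hasDerivAt_exp_sq_mul_primitive ha.ne' r) (fun _ => exp_sq_mul_nonneg)
    (tendsto_exp_sq_mul_primitive ha)]
  simp only [sub_self, mul_zero, exp_zero, one_pow]
  field_simp
  ring

lemma exteriorEnergy_exp (ha : 0 < a) :
    exteriorEnergy 1 (fun r => exp (-a * (r - 1))) = (2 * a + 1) / 4 := by
  have h : exteriorEnergy 1 (fun r => exp (-a * (r - 1)))
      = a ^ 2 * exteriorMass 1 (fun r => exp (-a * (r - 1))) := by
    rw [exteriorEnergy, exteriorMass, ← integral_const_mul]
    simp only [(hasDerivAt_exp_neg_mul_sub_one a _).deriv]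
    ring_nf
  rw [h, exteriorMass_exp ha]
  field_simp

lemma four_mul_sq_div_mem_muSet (hj : 0 < j) (hj8 : j < 8) :
    4 * j ^ 2 / (8 - j) ^ 2 ∈ muSet j := by
  have hj8' : 8 - j ≠ 0 := by linarith
  set a := (8 - j) / (2 * j) with ha_def
  have ha : 0 < a := div_pos (by linarith) (by linarith)
  have henergy : exteriorEnergy 1 (fun r => exp (-a * (r - 1))) = 2 / j := by
    rw [exteriorEnergy_exp ha, ha_def]
    field_simp
    ring
  have hmass : exteriorMass 1 (fun r => exp (-a * (r - 1))) = 8 * j / (8 - j) ^ 2 := by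
    rw [exteriorMass_exp ha, ha_def]
    field_simp
    ring
  have hmem := div_mem_muSet (fun r _ => (hasDerivAt_exp_neg_mul_sub_one a r).differentiableAt)
    (by rw [henergy]; positivity) (integrableOn_exp_sq_mul ha)
  have hlevel : 2 * (1 : ℝ) ^ 2 / (2 / j) = j := by field_simp
  have hratio : 8 * j / (8 - j) ^ 2 / (2 / j) = 4 * j ^ 2 / (8 - j) ^ 2 := by
    field_simp
    norm_num
  rwa [henergy, hmass, sub_self, mul_zero, exp_zero, hlevel, hratio] at hmem

lemma isRiccatiSupersolution_const_mul {κ : ℝ} (R : ℝ) (hκ : 0 ≤ κ) :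
    IsRiccatiSupersolution R (κ ^ 2) fun r => κ * r := by
  intro r _
  refine ⟨by fun_prop, ?_⟩
  have hcancel : (κ * r) ^ 2 / r - κ ^ 2 * r = 0 := by
    field_simp
    ring
  rw [hcancel, deriv_const_mul_field, deriv_id'', mul_one]
  exact hκ

lemma AdmMu.sq_div_le_exteriorMass {u : ℝ → ℝ} (hu : AdmMu j u) (hj : 0 < j) :
    j ^ 2 / 16 ≤ exteriorMass 1 u := by
  have h := hu.riccatiSupersolution_mul_le
    (isRiccatiSupersolution_const_mul (κ := 4 / j) 1 (by positivity))
    (by positivity) (by positivity) fun r _ => le_rfl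
  have htwo : 4 / j * 1 * (j / 2) = 2 := by
    field_simp
    norm_num
  have hone : 1 ≤ 16 * exteriorMass 1 u / j ^ 2 := by
    rw [htwo] at h
    calc (1 : ℝ) ≤ (4 / j) ^ 2 * exteriorMass 1 u := by linarith
      _ = 16 * exteriorMass 1 u / j ^ 2 := by ring
  rw [le_div_iff₀ (by positivity)] at hone
  linarith

lemma abs_mu_sub_sq_div_le (hj : 0 < j) (hj1 : j ≤ 1) : |mu j - j ^ 2 / 16| ≤ j ^ 3 := by
  have hmem := four_mul_sq_div_mem_muSet hj (by linarith)
  have hlower : j ^ 2 / 16 ≤ mu j := by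
    refine le_csInf ⟨_, hmem⟩ ?_
    rintro _ ⟨u, hu, rfl⟩
    exact hu.sq_div_le_exteriorMass hj
  have hupper : mu j ≤ j ^ 2 / 16 + j ^ 3 :=
    calc mu j ≤ 4 * j ^ 2 / (8 - j) ^ 2 := csInf_le (bddBelow_muSet j) hmem
      _ ≤ j ^ 2 / 16 + j ^ 3 := by
          rw [div_le_iff₀ (by nlinarith)]
          have hfactor : 0 ≤ j ^ 3 * ((8 - j) ^ 2 - 1 + j / 16) :=
            mul_nonneg (by positivity) (by nlinarith)
          linarith
  rw [abs_of_nonneg (by linarith)]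
  linarith

end SmallLevel

section Extremal

variable {y r : ℝ}

lemma hasDerivAt_const_mul_sq (y r : ℝ) : HasDerivAt (fun r => y * r ^ 2) (2 * y * r) r :=
  ((hasDerivAt_pow 2 r).const_mul y).congr_deriv (by norm_num; ring)

lemma tendsto_const_mul_sq_atTop (hy : 0 < y) : Tendsto (fun r => y * r ^ 2) atTop atTop :=
  (tendsto_pow_atTop two_ne_zero).const_mul_atTop hy

lemma hasDerivAt_macdonald_zero_const_mul_sq (hy : 0 < y) (hr : 0 < r) :
    HasDerivAt (fun r => macdonald 0 (y * r ^ 2)) (-(2 * macdonald 1 (y * r ^ 2) / r)) r := by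
  refine ((hasDerivAt_macdonald_zero (y := y * r ^ 2) (by positivity)).comp r
    (hasDerivAt_const_mul_sq y r)).congr_deriv ?_
  field_simp

lemma exteriorEnergy_macdonald_zero (hy : 0 < y) :
    exteriorEnergy 1 (fun r => macdonald 0 (y * r ^ 2)) = 2 * energyPrimitive y := by
  have hderiv (r : ℝ) (hr : r ∈ Ici 1) : HasDerivAt (fun r => -2 * energyPrimitive (y * r ^ 2))
      (deriv (fun r => macdonald 0 (y * r ^ 2)) r ^ 2 * r) r := by
    have hr : 0 < r := one_pos.trans_le hr
    refine (((hasDerivAt_energyPrimitive (y := y * r ^ 2) (by positivity)).comp r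
      (hasDerivAt_const_mul_sq y r)).const_mul (-2)).congr_deriv ?_
    rw [(hasDerivAt_macdonald_zero_const_mul_sq hy hr).deriv]
    field_simp
  have hlim : Tendsto (fun r => -2 * energyPrimitive (y * r ^ 2)) atTop (𝓝 0) := by
    simpa using
      (tendsto_energyPrimitive_atTop.comp (tendsto_const_mul_sq_atTop hy)).const_mul (-2)
  rw [exteriorEnergy, integral_Ioi_of_hasDerivAt_of_nonneg' hderiv
    (fun r hr => mul_nonneg (sq_nonneg _) (one_pos.trans hr).le) hlim]
  ring_nf

lemma integrableOn_and_exteriorMass_macdonald_zero (hy : 0 < y) :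
    IntegrableOn (fun r => macdonald 0 (y * r ^ 2) ^ 2 * r) (Ioi 1) ∧
      exteriorMass 1 (fun r => macdonald 0 (y * r ^ 2)) = massPrimitive y / (2 * y) := by
  have hderiv (r : ℝ) (hr : r ∈ Ici 1) :
      HasDerivAt (fun r => -(massPrimitive (y * r ^ 2) / (2 * y)))
        (macdonald 0 (y * r ^ 2) ^ 2 * r) r := by
    have hr : 0 < r := one_pos.trans_le hr
    refine (((hasDerivAt_massPrimitive (y := y * r ^ 2) (by positivity)).comp r
      (hasDerivAt_const_mul_sq y r)).div_const (2 * y)).neg.congr_deriv ?_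
    field_simp
  have hlim : Tendsto (fun r => -(massPrimitive (y * r ^ 2) / (2 * y))) atTop (𝓝 0) := by
    simpa using
      ((tendsto_massPrimitive_atTop.comp (tendsto_const_mul_sq_atTop hy)).div_const (2 * y)).neg
  have hnonneg (r : ℝ) (hr : r ∈ Ioi 1) : 0 ≤ macdonald 0 (y * r ^ 2) ^ 2 * r :=
    mul_nonneg (sq_nonneg _) (one_pos.trans hr).le
  refine ⟨integrableOn_Ioi_deriv_of_nonneg' hderiv hnonneg hlim, ?_⟩
  rw [exteriorMass, integral_Ioi_of_hasDerivAt_of_nonneg' hderiv hnonneg hlim]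
  ring_nf

lemma mem_muSet_inv_reciprocalLevel (hy : 0 < y) :
    (macdonaldRatio y ^ 2 - y) / (4 * y * reciprocalLevel y) ∈ muSet (reciprocalLevel y)⁻¹ := by
  have hb := macdonald_pos 0 hy
  have hd := reciprocalLevel_pos hy
  have henergy := exteriorEnergy_macdonald_zero hy
  obtain ⟨hmass_int, hmass⟩ := integrableOn_and_exteriorMass_macdonald_zero hy
  rw [energyPrimitive_eq_mul_reciprocalLevel hy] at henergy
  rw [massPrimitive_eq_mul hy] at hmass
  have hmem := div_mem_muSet
    (fun r hr => (hasDerivAt_macdonald_zero_const_mul_sq hy (one_pos.trans_le hr)).differentiableAt)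
    (by rw [henergy]; positivity) hmass_int
  rw [henergy, hmass, one_pow, mul_one] at hmem
  have hlevel : 2 * macdonald 0 y ^ 2 / (2 * (macdonald 0 y ^ 2 * reciprocalLevel y))
      = (reciprocalLevel y)⁻¹ := by field_simp
  have hvalue : macdonald 0 y ^ 2 * (macdonaldRatio y ^ 2 - y) / (2 * y)
      / (2 * (macdonald 0 y ^ 2 * reciprocalLevel y))
      = (macdonaldRatio y ^ 2 - y) / (4 * y * reciprocalLevel y) := by
    field_simp
    norm_num
  rwa [hlevel, hvalue] at hmem

lemma isRiccatiSupersolution_macdonaldRatio {R : ℝ} (hR : 0 < R) (hy : 0 < y) :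
    IsRiccatiSupersolution R (4 * y) fun r => 2 * macdonaldRatio (y * r ^ 2) := by
  intro r hr
  have hr : 0 < r := hR.trans_le hr
  have hderiv := ((hasDerivAt_macdonaldRatio (y := y * r ^ 2) (by positivity)).comp r
    (hasDerivAt_const_mul_sq y r)).const_mul 2
  refine ⟨hderiv.differentiableAt, le_of_eq ?_⟩
  refine Eq.trans ?_ hderiv.deriv.symm
  field_simp
  ring

lemma AdmMu.le_exteriorMass_of_reciprocalLevel {u : ℝ → ℝ} (hy : 0 < y)
    (hu : AdmMu (reciprocalLevel y)⁻¹ u) :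
    (macdonaldRatio y ^ 2 - y) / (4 * y * reciprocalLevel y) ≤ exteriorMass 1 u := by
  have hd := reciprocalLevel_pos hy
  have hgrowth (r : ℝ) (hr : 1 ≤ r) : 2 * macdonaldRatio (y * r ^ 2) ≤ 2 * (1 + √y) * r := by
    have hle := macdonaldRatio_le_one_add_sqrt (y := y * r ^ 2) (by positivity)
    rw [sqrt_mul hy.le, sqrt_sq (by linarith)] at hle
    linarith
  have h := hu.riccatiSupersolution_mul_le (isRiccatiSupersolution_macdonaldRatio one_pos hy)
    (by positivity) (by positivity) hgrowth
  have hlevel : 2 * macdonaldRatio (y * 1 ^ 2) * ((reciprocalLevel y)⁻¹ / 2)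
      = macdonaldRatio y / reciprocalLevel y := by
    rw [one_pow, mul_one]
    ring
  rw [hlevel, div_le_iff₀ hd] at h
  rw [div_le_iff₀ (by positivity)]
  calc macdonaldRatio y ^ 2 - y = macdonaldRatio y - reciprocalLevel y := by
        rw [reciprocalLevel]
        ring
    _ ≤ exteriorMass 1 u * (4 * y * reciprocalLevel y) := by linarith

lemma mu_inv_reciprocalLevel (hy : 0 < y) :
    mu (reciprocalLevel y)⁻¹ = (macdonaldRatio y ^ 2 - y) / (4 * y * reciprocalLevel y) := by
  refine IsLeast.csInf_eq ⟨mem_muSet_inv_reciprocalLevel hy, ?_⟩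
  rintro _ ⟨u, hu, rfl⟩
  exact hu.le_exteriorMass_of_reciprocalLevel hy

end Extremal

section LargeLevel

/-- The degree-five polynomial in `x = 1 / j` in the expansion of `1 / μ(j)`. -/
def expansionPolynomial (x : ℝ) : ℝ :=
  1 - x - (1 / 2) * x ^ 2 - (5 / 6) * x ^ 3 - (43 / 24) * x ^ 4 - (529 / 120) * x ^ 5

/-- The relative error of the expansion of `1 / μ(j)` at `j = (reciprocalLevel y)⁻¹`, as a function
of `s = macdonaldRatio y` and of the two quantities `e = y / s ^ 2` and `η = 1 / s + log y + 2 * γ`,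
which are smaller than every power of `s`. -/
def expansionError (p : ℝ × ℝ × ℝ) : ℝ :=
  let N := 1 - p.1 + p.1 * p.2.1
  exp ((1 - p.2.1) / N - 1 + p.2.2) * (N ^ 2 / (1 - p.2.1)) - expansionPolynomial (p.1 * N)

lemma contDiffAt_expansionError : ContDiffAt ℝ 1 expansionError 0 := by
  unfold expansionError expansionPolynomial
  fun_prop (disch := norm_num)

lemma expansionError_zero_right {s : ℝ} (hs : 1 - s ≠ 0) :
    expansionError (s, 0) =
      exp (s / (1 - s)) * (1 - s) ^ 2 - expansionPolynomial (s * (1 - s)) := by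
  have hexponent : 1 / (1 - s) - 1 = s / (1 - s) := by
    field_simp
    ring
  simp [expansionError, ← hexponent]

lemma eventually_one_sub_ne_zero : ∀ᶠ s : ℝ in 𝓝 0, 1 - s ≠ 0 :=
  (by fun_prop : ContinuousAt (fun s : ℝ => 1 - s) 0).eventually_ne (by norm_num)

lemma isBigO_exp_div_one_sub_sub_sum (n : ℕ) :
    (fun s : ℝ => exp (s / (1 - s)) - ∑ i ∈ Finset.range n, (s / (1 - s)) ^ i / i !)
      =O[𝓝 0] fun s => s ^ n := by
  have hinv : (fun s : ℝ => (1 - s)⁻¹) =O[𝓝 0] fun _ => (1 : ℝ) :=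
    Tendsto.isBigO_one ℝ (ContinuousAt.tendsto (by fun_prop (disch := norm_num)))
  have hdiv : (fun s : ℝ => s / (1 - s)) =O[𝓝 0] fun s => s := by
    simpa [div_eq_mul_inv] using (isBigO_refl (fun s : ℝ => s) (𝓝 0)).mul hinv
  exact ((Real.exp_sub_sum_range_isBigO_pow n).comp_tendsto
    (hdiv.trans_tendsto tendsto_id)).trans (hdiv.pow n)

lemma isBigO_sum_mul_sub_expansionPolynomial :
    (fun s : ℝ => (∑ i ∈ Finset.range 6, (s / (1 - s)) ^ i / i !) * (1 - s) ^ 2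
      - expansionPolynomial (s * (1 - s))) =O[𝓝 0] fun s => s ^ 6 := by
  let q (s : ℝ) : ℝ := (-1417 / 120 + 2909 / 40 * s - 22699 / 120 * s ^ 2 + 6523 / 24 * s ^ 3
    - 9373 / 40 * s ^ 4 + 14597 / 120 * s ^ 5 - 529 / 15 * s ^ 6 + 529 / 120 * s ^ 7)
    * (1 - s)⁻¹ ^ 3
  have hq : q =O[𝓝 0] fun _ => (1 : ℝ) :=
    Tendsto.isBigO_one ℝ (ContinuousAt.tendsto (by fun_prop (disch := norm_num)))
  have hfactor : (fun s : ℝ => (∑ i ∈ Finset.range 6, (s / (1 - s)) ^ i / i !) * (1 - s) ^ 2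
      - expansionPolynomial (s * (1 - s))) =ᶠ[𝓝 0] fun s => s ^ 6 * q s := by
    filter_upwards [eventually_one_sub_ne_zero] with s hs
    simp only [Finset.sum_range_succ, Finset.sum_range_zero, Nat.factorial, expansionPolynomial, q]
    push_cast
    field_simp
    ring
  simpa using hfactor.trans_isBigO ((isBigO_refl (fun s : ℝ => s ^ 6) (𝓝 0)).mul hq)

lemma isBigO_expansionError_zero_right :
    (fun s => expansionError (s, 0)) =O[𝓝 0] fun s => s ^ 6 := by
  have hsq : (fun s : ℝ => (1 - s) ^ 2) =O[𝓝 0] fun _ => (1 : ℝ) :=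
    Tendsto.isBigO_one ℝ (ContinuousAt.tendsto (by fun_prop))
  have hexp := (isBigO_exp_div_one_sub_sub_sum 6).mul hsq
  simp only [mul_one] at hexp
  refine (hexp.add isBigO_sum_mul_sub_expansionPolynomial).congr' ?_ EventuallyEq.rfl
  filter_upwards [eventually_one_sub_ne_zero] with s hs
  rw [expansionError_zero_right hs]
  ring

lemma isBigO_sub_apply_zero_right {E F G : Type*} [NormedAddCommGroup E] [NormedSpace ℝ E]
    [NormedAddCommGroup F] [NormedSpace ℝ F] [NormedAddCommGroup G] [NormedSpace ℝ G]
    {f : E × F → G} (hf : ContDiffAt ℝ 1 f 0) :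
    (fun p => f p - f (p.1, 0)) =O[𝓝 0] fun p => p.2 := by
  obtain ⟨K, t, ht, hlip⟩ := hf.exists_lipschitzOnWith
  have hproj : Tendsto (fun p : E × F => (p.1, (0 : F))) (𝓝 0) (𝓝 0) :=
    (by fun_prop : Continuous fun p : E × F => (p.1, (0 : F))).tendsto' 0 0 rfl
  refine IsBigO.of_bound K ?_
  filter_upwards [ht, hproj ht] with p hp hp'
  have hdist : ‖p - (p.1, 0)‖ = ‖p.2‖ := by simp [Prod.norm_def]
  exact hdist ▸ hlip.norm_sub_le hp hp'

lemma isBigO_expansionError_macdonaldRatio :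
    (fun y => expansionError (macdonaldRatio y, y / macdonaldRatio y ^ 2,
      (macdonaldRatio y)⁻¹ + log y + 2 * eulerMascheroniConstant))
      =O[𝓝[>] 0] fun y => macdonaldRatio y ^ 6 := by
  have hs := tendsto_macdonaldRatio
  have hs6 : Tendsto (fun y => macdonaldRatio y ^ 6) (𝓝[>] 0) (𝓝 0) := by simpa using hs.pow 6
  have he : (fun y => y / macdonaldRatio y ^ 2) =O[𝓝[>] 0] fun y => macdonaldRatio y ^ 6 := by
    refine ((isBigO_id_macdonaldRatio_pow 8).mul
      (isBigO_refl (fun y => (macdonaldRatio y ^ 2)⁻¹) _)).congr' EventuallyEq.rfl ?_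
    filter_upwards [self_mem_nhdsWithin] with y hy
    have := (macdonaldRatio_pos hy).ne'
    field_simp
  have hη := isBigO_inv_macdonaldRatio_add_log.trans (isBigO_sqrt_macdonaldRatio_pow 6)
  have hlim := hs.prodMk_nhds
    ((he.trans_tendsto hs6).prodMk_nhds (hη.trans_tendsto hs6))
  have herror := ((isBigO_sub_apply_zero_right contDiffAt_expansionError).comp_tendsto hlim).trans
    (he.prod_left hη)
  simpa using herror.add (isBigO_expansionError_zero_right.comp_tendsto hs)

lemma reciprocalLevel_eq_mul {y : ℝ} (hy : 0 < y) :
    reciprocalLevel y = macdonaldRatio y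
      * (1 - macdonaldRatio y + macdonaldRatio y * (y / macdonaldRatio y ^ 2)) := by
  have := (macdonaldRatio_pos hy).ne'
  rw [reciprocalLevel]
  field_simp
  ring

lemma isBigO_macdonaldRatio_reciprocalLevel :
    macdonaldRatio =O[𝓝[>] 0] reciprocalLevel := by
  refine IsBigO.of_bound 2 ?_
  filter_upwards [self_mem_nhdsWithin, tendsto_macdonaldRatio.eventually_le_const one_half_pos]
    with y hy hle
  have hpos := macdonaldRatio_pos hy
  rw [norm_of_nonneg hpos.le, norm_of_nonneg (reciprocalLevel_pos hy).le, reciprocalLevel]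
  nlinarith [mem_Ioi.1 hy]

lemma inv_mu_inv_reciprocalLevel_sub {y : ℝ} (hy : 0 < y) :
    1 / mu (reciprocalLevel y)⁻¹ - 4 * (reciprocalLevel y)⁻¹
        * exp (1 - 2 * eulerMascheroniConstant - (reciprocalLevel y)⁻¹)
        * expansionPolynomial (reciprocalLevel y)
      = 4 * (reciprocalLevel y)⁻¹
        * exp (1 - 2 * eulerMascheroniConstant - (reciprocalLevel y)⁻¹)
        * expansionError (macdonaldRatio y, y / macdonaldRatio y ^ 2,
          (macdonaldRatio y)⁻¹ + log y + 2 * eulerMascheroniConstant) := by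
  have hs := macdonaldRatio_pos hy
  have hd := reciprocalLevel_eq_mul hy
  have hdpos := reciprocalLevel_pos hy
  set s := macdonaldRatio y
  set d := reciprocalLevel y
  set e := y / s ^ 2 with he
  set N := 1 - s + s * e
  have hye : y = e * s ^ 2 := by
    rw [he]
    field_simp
  have hN : 0 < N := pos_of_mul_pos_right (hd ▸ hdpos) hs.le
  have hinv : 1 / mu d⁻¹ = 4 * d⁻¹ * (y * (N ^ 2 / (1 - e))) := by
    have hmu : mu d⁻¹ = (s ^ 2 - y) / (4 * y * d) := mu_inv_reciprocalLevel hy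
    have hnum : s ^ 2 - y = s ^ 2 * (1 - e) := by linear_combination -hye
    rw [hmu, one_div_div, hnum, hd]
    field_simp
  have hexp : y = exp (1 - 2 * eulerMascheroniConstant - d⁻¹)
      * exp ((1 - e) / N - 1 + (s⁻¹ + log y + 2 * eulerMascheroniConstant)) := by
    have hdinv : d⁻¹ = s⁻¹ + (1 - e) / N := by
      rw [hd]
      field_simp
      ring
    rw [← exp_add, hdinv]
    conv_lhs => rw [← exp_log hy]
    ring_nf
  have herror : expansionError (s, e, s⁻¹ + log y + 2 * eulerMascheroniConstant)
      = exp ((1 - e) / N - 1 + (s⁻¹ + log y + 2 * eulerMascheroniConstant)) * (N ^ 2 / (1 - e))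
        - expansionPolynomial d := by
    rw [hd]
    rfl
  rw [hinv, herror]
  linear_combination 4 * d⁻¹ * (N ^ 2 / (1 - e)) * hexp

lemma atTop_le_map_nhdsGT {α β : Type*} [ConditionallyCompleteLinearOrder α] [TopologicalSpace α]
    [OrderTopology α] [DenselyOrdered α] [NoMaxOrder α] [LinearOrder β] [TopologicalSpace β]
    [OrderClosedTopology β] {f : α → β} {a : α} (hf : ContinuousOn f (Ioi a))
    (hlim : Tendsto f (𝓝[>] a) atTop) : atTop ≤ map f (𝓝[>] a) := by
  intro t ht
  obtain ⟨b, hb, hsub⟩ := mem_nhdsGT_iff_exists_Ioo_subset.1 ht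
  obtain ⟨c, hc⟩ := nonempty_Ioo.2 (mem_Ioi.1 hb)
  refine mem_of_superset (Ici_mem_atTop (f c)) ?_
  refine (isPreconnected_Ioo.intermediate_value_Ici hc (le_principal_iff.2 (Ioo_mem_nhdsGT hb))
    (hf.mono Ioo_subset_Ioi_self) hlim).trans ?_
  exact image_subset_iff.2 hsub

lemma isBigO_inv_mu_sub_expansion :
    (fun j => 1 / mu j
        - 4 * j * exp (1 - 2 * eulerMascheroniConstant - j) * expansionPolynomial j⁻¹)
      =O[atTop] fun j => 4 * j * exp (1 - 2 * eulerMascheroniConstant - j) * j⁻¹ ^ 6 := by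
  have hcont : ContinuousOn (fun y => (reciprocalLevel y)⁻¹) (Ioi 0) :=
    continuousOn_reciprocalLevel.inv₀ fun y hy => (reciprocalLevel_pos hy).ne'
  have hlim : Tendsto (fun y => (reciprocalLevel y)⁻¹) (𝓝[>] 0) atTop :=
    tendsto_inv_nhdsGT_zero.comp <| tendsto_nhdsWithin_iff.2
      ⟨tendsto_reciprocalLevel, eventually_mem_nhdsWithin.mono fun y hy => reciprocalLevel_pos hy⟩
  refine IsBigO.mono (isBigO_map.2 ?_) (atTop_le_map_nhdsGT hcont hlim)
  refine ((isBigO_refl (fun y => 4 * (reciprocalLevel y)⁻¹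
    * exp (1 - 2 * eulerMascheroniConstant - (reciprocalLevel y)⁻¹)) (𝓝[>] 0)).mul
    (isBigO_expansionError_macdonaldRatio.trans
      (isBigO_macdonaldRatio_reciprocalLevel.pow 6))).congr' ?_ ?_
  · filter_upwards [self_mem_nhdsWithin] with y hy
    simpa using (inv_mu_inv_reciprocalLevel_sub hy).symm
  · exact .of_eq (by ext; simp)

end LargeLevel

/-- Asymptotic expansions of `μ`: as `j → ∞`,
`1/μ(j) = 4 j e^{1-2γ-j} (1 - j⁻¹ - j⁻²/2 - 5j⁻³/6 - 43j⁻⁴/24 - 529j⁻⁵/120 + O(j⁻⁶))`,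
and as `j → 0+`, `μ(j) = j²/16 + O(j³)`. -/
theorem mu_asymptotics :
    (∃ C : ℝ, 0 < C ∧ ∃ j₀ : ℝ, 0 < j₀ ∧ ∀ j : ℝ, j₀ ≤ j →
      |1 / mu j -
        4 * j * exp (1 - 2 * eulerMascheroniConstant - j) *
          (1 - j⁻¹ - (1 / 2) * j⁻¹ ^ 2 - (5 / 6) * j⁻¹ ^ 3
            - (43 / 24) * j⁻¹ ^ 4 - (529 / 120) * j⁻¹ ^ 5)| ≤
        C * (4 * j * exp (1 - 2 * eulerMascheroniConstant - j)) * j⁻¹ ^ 6) ∧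
    (∃ C : ℝ, 0 < C ∧ ∃ j₁ : ℝ, 0 < j₁ ∧ ∀ j : ℝ, 0 < j → j ≤ j₁ →
      |mu j - j ^ 2 / 16| ≤ C * j ^ 3) := by
  refine ⟨?_, 1, one_pos, 1, one_pos, fun j hj hj1 => ?_⟩
  · obtain ⟨C, hC, hbound⟩ := isBigO_inv_mu_sub_expansion.exists_pos
    obtain ⟨j₀, hj₀⟩ := eventually_atTop.1 hbound.bound
    refine ⟨C, hC, max j₀ 1, by positivity, fun j hj => ?_⟩
    have hj1 : 1 ≤ j := (le_max_right _ _).trans hj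
    refine (hj₀ j ((le_max_left _ _).trans hj)).trans_eq ?_
    rw [norm_of_nonneg (by positivity), mul_assoc C]
  · simpa using abs_mu_sub_sq_div_le hj hj1
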